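/- Let k ≥ 0 be an integer and let G' be a graph of genus C(k,2) with a vertex v such that for every integer 1 ≤ l ≤ k-2 one has r_{G'}(l(k+1)·v) ≥ l(l+3)/2. Let n ≥ 1 and let G be the graph obtained from G' by attaching a complete graph K_n: add n new vertices pairwise joined by exactly one edge, and join v to each of the n new vertices by exactly k+1 edges. Then: (1) the genus of G is C(k+n, 2); (2) for every vertex u of K_n, the divisor (k+n-2)(k+n+1)·u is linearly equivalent to the canonical divisor K_G; (3) for every integer -2 ≤ l ≤ k+n and every vertex u of K_n, the rank of l(k+n+1)·u on G is at least l(l+3)/2. -/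

import Mathlib

open Finset

variable {V : Type*} [Fintype V] [DecidableEq V]

/-- A finite loopless multigraph on vertex type `V`, given by symmetric edge multiplicities. -/
structure Multigraph (V : Type*) [Fintype V] [DecidableEq V] where
  mult : V → V → ℕ
  symm : ∀ u v, mult u v = mult v u
  loopless : ∀ v, mult v v = 0

namespace Multigraph

def Adj (G : Multigraph V) (u v : V) : Prop := 0 < G.mult u v

/-- A graph is connected. -/
def Connected (G : Multigraph V) : Prop :=
  Nonempty V ∧ ∀ u v : V, Relation.ReflTransGen G.Adj u v

/-- Valence of a vertex. -/
def valence (G : Multigraph V) (v : V) : ℕ := ∑ u, G.mult v u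

/-- The Laplacian applied to an integer-valued function on the vertices. -/
def laplacian (G : Multigraph V) (f : V → ℤ) : V → ℤ :=
  fun w => ∑ u, (G.mult w u : ℤ) * (f w - f u)

/-- Degree of a divisor. -/
def degree (D : V → ℤ) : ℤ := ∑ v, D v

/-- A divisor is effective if all coefficients are nonnegative. -/
def Effective (D : V → ℤ) : Prop := ∀ v, 0 ≤ D v

/-- Linear equivalence of divisors: they differ by a sequence of chip-firing moves,
equivalently by a Laplacian of an integer function. -/
def LinEquiv (G : Multigraph V) (D D' : V → ℤ) : Prop :=
  ∃ f : V → ℤ, D' = D - G.laplacian f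

/-- A divisor is winnable if it is linearly equivalent to an effective divisor. -/
def Winnable (G : Multigraph V) (D : V → ℤ) : Prop :=
  ∃ E : V → ℤ, Effective E ∧ G.LinEquiv D E

/-- The Baker–Norine rank of a divisor: the largest `r` such that `D - E` is winnable for
every effective divisor `E` of degree `r` (the defining set contains all negative integers,
and its supremum is `-1` precisely when `D` itself is not winnable). -/
noncomputable def rank (G : Multigraph V) (D : V → ℤ) : ℤ :=
  sSup {r : ℤ | ∀ E : V → ℤ, Effective E → degree E = r → G.Winnable (fun w => D w - E w)}

/-- The `k`-th gonality of a graph: the smallest degree of a divisor of rank `k`. -/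
noncomputable def gonality (G : Multigraph V) (k : ℤ) : ℤ :=
  sInf {d : ℤ | ∃ D : V → ℤ, G.rank D = k ∧ degree D = d}

/-- A graph is gonality-tight if its second gonality exceeds its first by exactly 1. -/
def GonalityTight (G : Multigraph V) : Prop :=
  G.gonality 2 = G.gonality 1 + 1

/-- A divisor realises the `k`-th gonality if it has rank `k` and degree `gon_k(G)`. -/
def Realises (G : Multigraph V) (k : ℤ) (D : V → ℤ) : Prop :=
  G.rank D = k ∧ degree D = G.gonality k

/-- A divisor is `v`-reduced: nonnegative away from `v`, and set-firing any nonempty set of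
vertices not containing `v` creates a negative coefficient inside the set. -/
def Reduced (G : Multigraph V) (v : V) (D : V → ℤ) : Prop :=
  (∀ w, w ≠ v → 0 ≤ D w) ∧
    ∀ U : Finset V, U.Nonempty → v ∉ U →
      ∃ w ∈ U, D w - ∑ u ∈ Uᶜ, (G.mult w u : ℤ) < 0

/-- The genus (first Betti number) of a graph: `|E| - |V| + 1`. -/
def genus (G : Multigraph V) : ℤ :=
  ((∑ u, ∑ v, G.mult u v : ℕ) : ℤ) / 2 - Fintype.card V + 1

/-- The canonical divisor of a graph. -/
def canonical (G : Multigraph V) : V → ℤ :=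
  fun w => (G.valence w : ℤ) - 2

/-- The subgraph induced on a set `S` of vertices (with all edges among `S`). -/
def induce (G : Multigraph V) (S : Finset V) : Multigraph {x // x ∈ S} where
  mult a b := G.mult a b
  symm a b := G.symm a b
  loopless a := G.loopless a

/-- `G.SeparatedBy u w v` means every path from `w` to `v` passes through `u`. -/
def SeparatedBy (G : Multigraph V) (u w v : V) : Prop :=
  ¬ Relation.ReflTransGen (fun x y => G.Adj x y ∧ x ≠ u ∧ y ≠ u) w v

end Multigraph

/-- Size of the `i`-th level of a quasi-banana graph: level `0` has a single vertex. -/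
def qbSize (q : ℕ → ℕ) (i : ℕ) : ℕ := if i = 0 then 1 else q i

/-- `ℓ` is a quasi-banana labelling of `G` exhibiting `G ≅ QB_m(q_1, …, q_m)`:
`ℓ` is a bijection onto the pairs `(i, j)` with `i ≤ m`, `1 ≤ j ≤ qbSize q i`
(vertex `u_{i,j}` is the vertex labelled `(i,j)`), and the edge multiplicities are:
one edge between distinct vertices of the same level, `(∑_{k=1}^{i} q_k) + 2` edges
between `u_{i,1}` and each `u_{i+1,j}`, and no other edges. -/
def Multigraph.IsQBLabelling (G : Multigraph V) (m : ℕ) (q : ℕ → ℕ) (ℓ : V → ℕ × ℕ) : Prop :=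
  (∀ i, 1 ≤ i → i ≤ m → 0 < q i) ∧
  Function.Injective ℓ ∧
  (∀ v : V, (ℓ v).1 ≤ m ∧ 1 ≤ (ℓ v).2 ∧ (ℓ v).2 ≤ qbSize q (ℓ v).1) ∧
  (∀ i j : ℕ, i ≤ m → 1 ≤ j → j ≤ qbSize q i → ∃ v, ℓ v = (i, j)) ∧
  (∀ v w : V, v ≠ w → G.mult v w =
    if (ℓ v).1 = (ℓ w).1 then 1
    else if (ℓ v).1 + 1 = (ℓ w).1 ∧ (ℓ v).2 = 1 then (∑ i ∈ Finset.Icc 1 (ℓ v).1, q i) + 2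
    else if (ℓ w).1 + 1 = (ℓ v).1 ∧ (ℓ w).2 = 1 then (∑ i ∈ Finset.Icc 1 (ℓ w).1, q i) + 2
    else 0)

/-- A graph is a quasi-banana graph if it is isomorphic to some `QB_m(N)`. -/
def Multigraph.IsQuasiBanana (G : Multigraph V) : Prop :=
  ∃ (m : ℕ) (q : ℕ → ℕ) (ℓ : V → ℕ × ℕ), G.IsQBLabelling m q ℓ

/-- The graph obtained from `G'` by attaching a complete graph `K_n`: `n` new vertices
pairwise joined by exactly one edge, each joined to `v` by exactly `k+1` edges. -/
def attachComplete (G' : Multigraph V) (v : V) (k n : ℕ) : Multigraph (V ⊕ Fin n) where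
  mult x y :=
    match x, y with
    | Sum.inl a, Sum.inl b => G'.mult a b
    | Sum.inl a, Sum.inr _ => if a = v then k + 1 else 0
    | Sum.inr _, Sum.inl b => if b = v then k + 1 else 0
    | Sum.inr i, Sum.inr j => if i = j then 0 else 1
  symm := by
    rintro (a | i) (b | j)
    · exact G'.symm a b
    · rfl
    · rfl
    · by_cases h : i = j
      · simp [h]
      · simp [h, Ne.symm h]
  loopless := by
    rintro (a | i)
    · exact G'.loopless a
    · simp

/-!
A graph of genus `k * (k - 1) / 2` satisfying the rank hypothesis behaves like a smooth plane curve
of degree `k + 1` with line section `H = (k + 1) v`, and so does the attached graph with `k + n` in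
place of `k` and line section `L = (k + 1) v + u_1 + ⋯ + u_n`, which is equivalent to
`(k + n + 1) u_i`. To win `l L - E` with `2 deg E ≤ l (l + 3)`, induct on `l` and imitate plane
geometry. If `E` has more than `l` chips at some `u_i`, remove that "line" from the curve and from
`E`, passing to `l - 1`. Otherwise use a script constant on the new clique, which works as soon as
`l H` minus the part of `E` on the old graph is winnable there. If it is not, Riemann's inequality
shows that this part is large, and `(k + 1) L`, which is equivalent to `(k + 1) (k + n + 1) v`,
absorbs enough of it to pass to `l - k - 1`.

The canonical class needs no computation: by Riemann–Roch a divisor of degree `2 g - 2` and rank at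
least `g - 1` is canonical, and `(k + n - 2) L` is one. Riemann's inequality and this part of
Riemann–Roch rest on one fact: a divisor that is not winnable is equivalent to one bounded above by
the divisor of an acyclic orientation, which is found by burning a reduced divisor.
-/

namespace Multigraph

lemma effective_single {ι : Type*} [DecidableEq ι] (v : ι) {c : ℤ} (hc : 0 ≤ c) :
    Effective (Pi.single v c) :=
  show (0 : ι → ℤ) ≤ Pi.single v c from Pi.single_nonneg.2 hc

lemma ite_eq_smul_single {ι : Type*} [DecidableEq ι] (v : ι) (a b : ℤ) :
    (fun w => if w = v then a * b else 0) = a • Pi.single v b := by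
  ext w
  simp [Pi.single_apply]

section Degree

variable {ι : Type*} [Fintype ι]

lemma degree_add (D D' : ι → ℤ) : degree (D + D') = degree D + degree D' :=
  sum_add_distrib ..

lemma degree_sub (D D' : ι → ℤ) : degree (D - D') = degree D - degree D' :=
  sum_sub_distrib ..

lemma degree_smul (c : ℤ) (D : ι → ℤ) : degree (c • D) = c * degree D :=
  (mul_sum ..).symm

lemma degree_single [DecidableEq ι] (v : ι) (c : ℤ) : degree (Pi.single v c) = c :=
  sum_pi_single' v c univ |>.trans (if_pos (mem_univ v))

lemma degree_comp_inl_add_degree_comp_inr {κ : Type*} [Fintype κ] (D : ι ⊕ κ → ℤ) :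
    degree (D ∘ Sum.inl) + degree (D ∘ Sum.inr) = degree D :=
  (Fintype.sum_sum_type D).symm

lemma degree_mono {D D' : ι → ℤ} (h : D ≤ D') : degree D ≤ degree D' :=
  sum_le_sum fun v _ => h v

lemma Effective.degree_nonneg {D : ι → ℤ} (hD : Effective D) : 0 ≤ degree D :=
  sum_nonneg fun v _ => hD v

lemma Effective.eq_zero_of_degree_nonpos {D : ι → ℤ} (hD : Effective D) (h : degree D ≤ 0) :
    D = 0 :=
  (Fintype.sum_eq_zero_iff_of_nonneg hD).1 (h.antisymm hD.degree_nonneg)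

end Degree

variable (G : Multigraph V)

section Laplacian

/-- The Laplacian as a homomorphism from functions to divisors; its image is the group of
principal divisors. -/
def laplacianHom : (V → ℤ) →+ (V → ℤ) :=
  AddMonoidHom.mk' G.laplacian fun f g => by
    ext w
    simp only [laplacian, Pi.add_apply, ← sum_add_distrib]
    exact sum_congr rfl fun _ _ => by ring

lemma laplacian_add (f g : V → ℤ) : G.laplacian (f + g) = G.laplacian f + G.laplacian g :=
  map_add G.laplacianHom f g

lemma laplacian_neg (f : V → ℤ) : G.laplacian (-f) = -G.laplacian f :=
  map_neg G.laplacianHom f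

lemma laplacian_sub (f g : V → ℤ) : G.laplacian (f - g) = G.laplacian f - G.laplacian g :=
  map_sub G.laplacianHom f g

lemma laplacian_smul (c : ℤ) (f : V → ℤ) : G.laplacian (c • f) = c • G.laplacian f :=
  map_zsmul G.laplacianHom c f

lemma laplacian_sum {ι : Type*} (s : Finset ι) (f : ι → V → ℤ) :
    G.laplacian (∑ i ∈ s, f i) = ∑ i ∈ s, G.laplacian (f i) :=
  map_sum G.laplacianHom f s

lemma laplacian_const (c : ℤ) : G.laplacian (fun _ => c) = 0 := by
  ext w
  simp [laplacian]

lemma laplacian_single_self (b : V) : G.laplacian (Pi.single b 1) b = G.valence b := by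
  rw [laplacian, valence, Nat.cast_sum]
  refine sum_congr rfl fun u _ => ?_
  rcases eq_or_ne u b with rfl | hu
  · simp [G.loopless]
  · simp [hu]

lemma laplacian_single_of_ne {b x : V} (h : x ≠ b) :
    G.laplacian (Pi.single b 1) x = -(G.mult x b : ℤ) := by
  simp [laplacian, h, Pi.single_apply]

lemma laplacian_indicator_of_mem {U : Finset V} {x : V} (hx : x ∈ U) :
    G.laplacian (Set.indicator U 1) x = ∑ u ∈ Uᶜ, (G.mult x u : ℤ) := by
  simp only [laplacian, Set.indicator_of_mem (mem_coe.2 hx), Pi.one_apply]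
  rw [← sum_compl_add_sum U, add_eq_left.2]
  · exact sum_congr rfl fun u hu => by simp [mem_compl.1 hu]
  · exact sum_eq_zero fun u hu => by simp [hu]

lemma laplacian_indicator_nonpos_of_notMem {U : Finset V} {x : V} (hx : x ∉ U) :
    G.laplacian (Set.indicator U 1) x ≤ 0 := by
  refine sum_nonpos fun u _ => mul_nonpos_of_nonneg_of_nonpos (Nat.cast_nonneg _) ?_
  rw [Set.indicator_of_notMem (mem_coe.not.2 hx), zero_sub, Left.neg_nonpos_iff]
  exact Set.indicator_nonneg (fun _ _ => zero_le_one) u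

lemma dotProduct_laplacian (f g : V → ℤ) : f ⬝ᵥ G.laplacian g = G.laplacian f ⬝ᵥ g := by
  have hswap : ∑ w, ∑ u, (G.mult w u : ℤ) * (f w * g u) =
      ∑ w, ∑ u, (G.mult w u : ℤ) * (f u * g w) := by
    rw [sum_comm]
    simp only [G.symm]
  have hf : f ⬝ᵥ G.laplacian g =
      ∑ w, ∑ u, (G.mult w u : ℤ) * (f w * g w) - ∑ w, ∑ u, (G.mult w u : ℤ) * (f w * g u) := by
    simp only [dotProduct, laplacian, mul_sum, ← sum_sub_distrib]
    exact sum_congr rfl fun w _ => sum_congr rfl fun u _ => by ring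
  rw [hf, hswap]
  simp only [dotProduct, laplacian, sum_mul, ← sum_sub_distrib]
  exact sum_congr rfl fun w _ => sum_congr rfl fun u _ => by ring

lemma degree_laplacian (f : V → ℤ) : degree (G.laplacian f) = 0 := by
  have h := G.dotProduct_laplacian (fun _ => 1) f
  rwa [laplacian_const, zero_dotProduct, ← Pi.one_def, one_dotProduct] at h

end Laplacian

section LinearEquivalence

variable {G} {D D' : V → ℤ}

lemma LinEquiv.symm (h : G.LinEquiv D D') : G.LinEquiv D' D := by
  obtain ⟨f, rfl⟩ := h
  exact ⟨-f, by rw [laplacian_neg]; abel⟩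

lemma LinEquiv.smul (c : ℤ) (h : G.LinEquiv D D') : G.LinEquiv (c • D) (c • D') := by
  obtain ⟨f, rfl⟩ := h
  exact ⟨c • f, by rw [laplacian_smul, smul_sub]⟩

lemma LinEquiv.sub_right (h : G.LinEquiv D D') (E : V → ℤ) : G.LinEquiv (D - E) (D' - E) := by
  obtain ⟨f, rfl⟩ := h
  exact ⟨f, by abel⟩

lemma winnable_iff_exists_laplacian_le : G.Winnable D ↔ ∃ f, G.laplacian f ≤ D := by
  constructor
  · rintro ⟨E, hE, f, rfl⟩
    exact ⟨f, sub_nonneg.1 hE⟩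
  · rintro ⟨f, hf⟩
    exact ⟨D - G.laplacian f, sub_nonneg.2 hf, f, rfl⟩

lemma Effective.winnable (hD : Effective D) : G.Winnable D :=
  winnable_iff_exists_laplacian_le.2 ⟨fun _ => 0, by rwa [laplacian_const]⟩

lemma Winnable.add (h : G.Winnable D) (h' : G.Winnable D') : G.Winnable (D + D') := by
  rw [winnable_iff_exists_laplacian_le] at *
  obtain ⟨f, hf⟩ := h
  obtain ⟨g, hg⟩ := h'
  exact ⟨f + g, G.laplacian_add f g ▸ add_le_add hf hg⟩

lemma Winnable.mono (h : G.Winnable D) (hD : D ≤ D') : G.Winnable D' := by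
  simpa using h.add (Effective.winnable (sub_nonneg.2 hD))

lemma Winnable.degree_nonneg (h : G.Winnable D) : 0 ≤ degree D := by
  obtain ⟨f, hf⟩ := winnable_iff_exists_laplacian_le.1 h
  exact G.degree_laplacian f ▸ degree_mono hf

lemma LinEquiv.winnable_iff (h : G.LinEquiv D D') : G.Winnable D ↔ G.Winnable D' := by
  have of_linEquiv {A B : V → ℤ} (hAB : G.LinEquiv A B) (hB : G.Winnable B) : G.Winnable A := by
    obtain ⟨f, rfl⟩ := hAB
    obtain ⟨g, hg⟩ := winnable_iff_exists_laplacian_le.1 hB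
    refine winnable_iff_exists_laplacian_le.2 ⟨g + f, ?_⟩
    rw [laplacian_add]
    exact le_sub_iff_add_le.1 hg
  exact ⟨of_linEquiv h.symm, of_linEquiv h⟩

end LinearEquivalence

section Rank

variable {G} {D D' : V → ℤ}

lemma LinEquiv.rank_eq (h : G.LinEquiv D D') : G.rank D = G.rank D' := by
  unfold rank
  congr! 6 with r E
  exact (h.sub_right E).winnable_iff

lemma le_rank_iff [Nonempty V] {r : ℤ} :
    r ≤ G.rank D ↔ ∀ E, Effective E → degree E ≤ r → G.Winnable (D - E) := by
  obtain ⟨v⟩ := ‹Nonempty V›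
  let S := {r : ℤ | ∀ E, Effective E → degree E = r → G.Winnable (D - E)}
  have hbdd : BddAbove S := by
    refine ⟨max 0 (degree D), fun r hr => ?_⟩
    rcases le_total r 0 with h0 | h0
    · exact le_max_of_le_left h0
    · have := (hr (Pi.single v r) (effective_single v h0) (degree_single v r)).degree_nonneg
      rw [degree_sub, degree_single] at this
      exact le_max_of_le_right (sub_nonneg.1 this)
  have hne : S.Nonempty :=
    ⟨-1, fun E hE hd => absurd hE.degree_nonneg (by rw [hd]; decide)⟩
  refine ⟨fun h E hE hd => ?_, fun h => le_csSup hbdd fun E hE hd => h E hE hd.le⟩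
  have hdef : 0 ≤ sSup S - degree E := sub_nonneg.2 (hd.trans h)
  let F : V → ℤ := Pi.single v (sSup S - degree E)
  have hF : Effective F := effective_single v hdef
  have hwin : G.Winnable (D - (E + F)) :=
    Int.csSup_mem hne hbdd (E + F) (fun w => add_nonneg (hE w) (hF w))
      (by rw [degree_add, degree_single, add_sub_cancel])
  exact hwin.mono (sub_le_sub_left (le_add_of_nonneg_right hF) D)

lemma le_two_mul_rank_iff [Nonempty V] {r : ℤ} (hr : Even r) :
    r ≤ 2 * G.rank D ↔ ∀ E, Effective E → 2 * degree E ≤ r → G.Winnable (D - E) := by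
  obtain ⟨s, rfl⟩ := hr
  simp only [← two_mul, mul_le_mul_iff_right₀ (two_pos : (0 : ℤ) < 2), le_rank_iff]

lemma neg_one_le_rank [Nonempty V] : -1 ≤ G.rank D :=
  le_rank_iff.2 fun _ hE hd => absurd hE.degree_nonneg (by lia)

lemma Effective.rank_nonneg [Nonempty V] (hD : Effective D) : 0 ≤ G.rank D :=
  le_rank_iff.2 fun E hE hd => by
    rw [hE.eq_zero_of_degree_nonpos hd, sub_zero]
    exact hD.winnable

end Rank

section Reduced

variable {G}

lemma Connected.exists_laplacian_pos_at (hG : G.Connected) (q w : V) :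
    ∃ f, (∀ x, x ≠ q → 0 ≤ G.laplacian f x) ∧ (w ≠ q → 0 < G.laplacian f w) := by
  induction hG.2 q w with
  | refl => exact ⟨fun _ => 0, fun x _ => by simp [laplacian_const], fun h => absurd rfl h⟩
  | @tail b c _ hbc ih =>
    have hcb : 0 < G.mult c b := G.symm b c ▸ hbc
    have hne : c ≠ b := fun h => by simp [h, G.loopless] at hcb
    obtain ⟨f, hf, hfb⟩ := ih
    refine ⟨(G.valence b : ℤ) • f - Pi.single b 1, fun x hx => ?_, fun hc => ?_⟩
    · rw [laplacian_sub, laplacian_smul, Pi.sub_apply, Pi.smul_apply, smul_eq_mul]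
      rcases eq_or_ne x b with rfl | hxb
      · rw [laplacian_single_self]
        nlinarith [hfb hx, Nat.cast_nonneg (α := ℤ) (G.valence x)]
      · rw [G.laplacian_single_of_ne hxb, sub_neg_eq_add]
        exact add_nonneg (mul_nonneg (Nat.cast_nonneg _) (hf x hx)) (Nat.cast_nonneg _)
    · rw [laplacian_sub, laplacian_smul, Pi.sub_apply, Pi.smul_apply, smul_eq_mul,
        G.laplacian_single_of_ne hne, sub_neg_eq_add]
      exact add_pos_of_nonneg_of_pos (mul_nonneg (Nat.cast_nonneg _) (hf c hc)) (mod_cast hcb)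

lemma Connected.exists_potential (hG : G.Connected) (q : V) :
    ∃ h : V → ℤ, h q = 0 ∧ 0 ≤ h ∧ ∀ x, x ≠ q → 0 < G.laplacian h x := by
  choose F hF hFpos using hG.exists_laplacian_pos_at q
  let f := ∑ i, F i
  have hf (x : V) (hx : x ≠ q) : 0 < G.laplacian f x := by
    rw [laplacian_sum, Finset.sum_apply]
    exact sum_pos' (fun i _ => hF i x hx) ⟨x, mem_univ x, hFpos x hx⟩
  obtain ⟨m, -, hm⟩ := exists_min_image univ f ⟨q, mem_univ q⟩
  have hmq : m = q := by
    by_contra hne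
    refine (hf m hne).not_ge (sum_nonpos fun u hu => ?_)
    exact mul_nonpos_of_nonneg_of_nonpos (Nat.cast_nonneg _) (sub_nonpos.2 (hm u hu))
  subst hmq
  refine ⟨f - fun _ => f m, sub_self _, fun x => ?_, fun x hx => ?_⟩
  · exact sub_nonneg.2 (hm x (mem_univ x))
  · rw [laplacian_sub, laplacian_const, sub_zero]
    exact hf x hx

lemma Connected.exists_laplacian_le_off (hG : G.Connected) (q : V) (D : V → ℤ) :
    ∃ f, ∀ x, x ≠ q → G.laplacian f x ≤ D x := by
  obtain ⟨h, -, -, hpos⟩ := hG.exists_potential q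
  let N := degree |D|
  have hN (x : V) : |D x| ≤ N :=
    single_le_sum (f := |D|) (fun y _ => abs_nonneg (D y)) (mem_univ x)
  refine ⟨-N • h, fun x hx => ?_⟩
  rw [laplacian_smul, Pi.smul_apply, smul_eq_mul]
  have := hpos x hx
  nlinarith [hN x, abs_nonneg (D x), neg_abs_le (D x)]

lemma Connected.exists_reduced (hG : G.Connected) (q : V) (D : V → ℤ) :
    ∃ f, G.Reduced q (D - G.laplacian f) := by
  obtain ⟨h, hq, h0, hpos⟩ := hG.exists_potential q
  let energy (f : V → ℤ) : ℤ := h ⬝ᵥ (D - G.laplacian f)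
  have henergy {f : V → ℤ} (hf : ∀ x, x ≠ q → G.laplacian f x ≤ D x) : 0 ≤ energy f := by
    refine sum_nonneg fun x _ => ?_
    rcases eq_or_ne x q with rfl | hx
    · rw [hq, zero_mul]
    · exact mul_nonneg (h0 x) (sub_nonneg.2 (hf x hx))
  obtain ⟨f, hf, hmin⟩ := exists_minimalFor_of_wellFoundedLT
    (fun f => ∀ x, x ≠ q → G.laplacian f x ≤ D x) (fun f => (energy f).toNat)
    (hG.exists_laplacian_le_off q D)
  refine ⟨f, fun x hx => sub_nonneg.2 (hf x hx), fun U ⟨y, hy⟩ hqU => ?_⟩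
  by_contra! hU
  let g := f + Set.indicator U 1
  have hg (x : V) (hx : x ≠ q) : G.laplacian g x ≤ D x := by
    rw [laplacian_add, Pi.add_apply]
    by_cases hxU : x ∈ U
    · have := hU x hxU
      rw [G.laplacian_indicator_of_mem hxU]
      rw [Pi.sub_apply] at this
      linarith
    · linarith [hf x hx, G.laplacian_indicator_nonpos_of_notMem hxU]
  have hlt : energy g < energy f := by
    have hdrop : energy g = energy f - ∑ x ∈ U, G.laplacian h x := by
      simp only [energy, g, dotProduct_sub, dotProduct_add, G.dotProduct_laplacian h,
        sub_add_eq_sub_sub]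
      congr 1
      simp [dotProduct, Set.indicator_apply]
    have : 0 < ∑ x ∈ U, G.laplacian h x :=
      sum_pos (fun x hx => hpos x (ne_of_mem_of_not_mem hx hqU)) ⟨y, hy⟩
    lia
  have := henergy hg
  have := hmin hg
  lia

end Reduced

section OrderDivisor

/-- The divisor of a vertex ordering `p`: the indegree minus one of each vertex, for the acyclic
orientation which directs every edge towards its larger end. -/
def orderDivisor {α : Type*} [LinearOrder α] (p : V → α) (w : V) : ℤ :=
  (∑ u with p u < p w, (G.mult w u : ℤ)) - 1

lemma degree_canonical_eq_sum_mult :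
    degree G.canonical = ((∑ u, ∑ v, G.mult u v : ℕ) : ℤ) - 2 * Fintype.card V := by
  simp [degree, canonical, valence, sum_sub_distrib, mul_comm]

variable {α : Type*} [LinearOrder α] {p : V → α}

lemma orderDivisor_add_toDual (hp : p.Injective) :
    G.orderDivisor p + G.orderDivisor (OrderDual.toDual ∘ p) = G.canonical := by
  ext w
  have hsplit : ∑ u, (G.mult w u : ℤ) =
      ∑ u with p u < p w, (G.mult w u : ℤ) + ∑ u with p w < p u, (G.mult w u : ℤ) := by
    simp only [sum_filter, ← sum_add_distrib]
    refine sum_congr rfl fun u _ => ?_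
    rcases lt_trichotomy (p u) (p w) with h | h | h
    · simp [h, h.le]
    · simp [hp h, G.loopless]
    · simp [h, h.le]
  simp only [Pi.add_apply, orderDivisor, Function.comp_apply, OrderDual.toDual_lt_toDual,
    canonical, valence, Nat.cast_sum, hsplit]
  ring

lemma degree_orderDivisor_toDual (p : V → α) :
    degree (G.orderDivisor (OrderDual.toDual ∘ p)) = degree (G.orderDivisor p) := by
  simp only [degree, orderDivisor, Function.comp_apply, OrderDual.toDual_lt_toDual,
    sum_sub_distrib, sum_filter]
  rw [sum_comm]
  simp only [G.symm]

lemma degree_orderDivisor (hp : p.Injective) : degree (G.orderDivisor p) = G.genus - 1 := by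
  have h : 2 * degree (G.orderDivisor p) = degree G.canonical := by
    rw [← G.orderDivisor_add_toDual hp, degree_add, degree_orderDivisor_toDual, two_mul]
  rw [degree_canonical_eq_sum_mult] at h
  rw [genus]
  lia

lemma degree_canonical : degree G.canonical = 2 * G.genus - 2 := by
  have hp := (Fintype.equivFin V).injective
  rw [← G.orderDivisor_add_toDual hp, degree_add, degree_orderDivisor_toDual,
    G.degree_orderDivisor hp]
  ring

-- A firing script cannot help at the `p`-first vertex among those where it is maximal.
lemma not_winnable_orderDivisor [Nonempty V] (p : V → α) : ¬ G.Winnable (G.orderDivisor p) := by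
  rw [winnable_iff_exists_laplacian_le]
  rintro ⟨f, hf⟩
  obtain ⟨x, -, hx⟩ := exists_max_image univ f univ_nonempty
  obtain ⟨w, hw, hmin⟩ := exists_min_image {y | f y = f x} p ⟨x, by simp⟩
  simp only [mem_filter_univ] at hw hmin
  have hle : ∑ u with p u < p w, (G.mult w u : ℤ) ≤ G.laplacian f w := by
    rw [sum_filter]
    refine sum_le_sum fun u hu => ?_
    have hux : f u ≤ f x := hx u hu
    split_ifs with hlt
    · have hne : f u ≠ f x := fun h => (hmin u h).not_gt hlt
      exact le_mul_of_one_le_right (Nat.cast_nonneg _) (by lia)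
    · exact mul_nonneg (Nat.cast_nonneg _) (by lia)
  have := hf w
  rw [orderDivisor] at this
  lia

variable {G} {D : V → ℤ}

-- Dhar's burning algorithm: `p` records the order in which fire started outside `U` burns `U`.
lemma exists_burning_order {U : Finset V}
    (hU : ∀ W ⊆ U, W.Nonempty → ∃ w ∈ W, D w - ∑ u ∈ Wᶜ, (G.mult w u : ℤ) < 0) :
    ∃ p : V → ℕ, (∀ x, 0 < p x ↔ x ∈ U) ∧ Set.InjOn p U ∧ ∀ x ∈ U, D x ≤ G.orderDivisor p x := by
  induction U using Finset.strongInduction with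
  | H U ih =>
  rcases U.eq_empty_or_nonempty with rfl | hne
  · exact ⟨0, by simp⟩
  obtain ⟨w, hwU, hw⟩ := hU U Subset.rfl hne
  obtain ⟨p, hpos, hinj, hle⟩ := ih (U.erase w) (erase_ssubset hwU)
    fun W hW => hU W (hW.trans (erase_subset w U))
  have hp0 {x : V} (hx : x ∉ U.erase w) : p x = 0 := Nat.eq_zero_of_not_pos ((hpos x).not.2 hx)
  have hpw : p w = 0 := hp0 (notMem_erase w U)
  let p' (x : V) : ℕ := if x ∈ U then p x + 1 else 0
  have hp'U {x : V} (hx : x ∈ U) : p' x = p x + 1 := if_pos hx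
  refine ⟨p', fun x => by by_cases hx : x ∈ U <;> simp [p', hx], ?_, fun x hx => ?_⟩
  · have hinjU : Set.InjOn p U := by
      rw [← insert_erase hwU, coe_insert, Set.injOn_insert (by simp)]
      exact ⟨hinj, fun ⟨x, hx, hxw⟩ => ((hpos x).2 hx).ne' (hxw.trans hpw)⟩
    exact fun x hx y hy hxy => hinjU hx hy (by simpa [hp'U hx, hp'U hy] using hxy)
  · rcases eq_or_ne x w with rfl | hxw
    · have hbefore : ({u | p' u < p' x} : Finset V) = Uᶜ := by
        ext u
        by_cases hu : u ∈ U <;> simp [p', hu, hx, hpw]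
      rw [orderDivisor, hbefore]
      lia
    · have hxe : x ∈ U.erase w := mem_erase.2 ⟨hxw, hx⟩
      have hbefore : ({u | p' u < p' x} : Finset V) = ({u | p u < p x} : Finset V) := by
        ext u
        by_cases hu : u ∈ U
        · simp [p', hu, hx]
        · simp [p', hu, hx, hp0 (mt mem_of_mem_erase hu), (hpos x).2 hxe]
      rw [orderDivisor, hbefore]
      exact hle x hxe

lemma Reduced.exists_le_orderDivisor {q : V} (hD : G.Reduced q D) (hq : D q < 0) :
    ∃ p : V → ℕ, p.Injective ∧ D ≤ G.orderDivisor p := by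
  obtain ⟨p, hpos, hinj, hle⟩ := exists_burning_order (G := G) (D := D) (U := {q}ᶜ)
    fun W hW hne => hD.2 W hne fun h => by simpa using hW h
  have hpq : p q = 0 := by simpa using hpos q
  have hp {x : V} (hx : x ≠ q) : 0 < p x := (hpos x).2 (by simpa using hx)
  refine ⟨p, fun x y hxy => ?_, fun x => ?_⟩
  · by_cases hx : x = q <;> by_cases hy : y = q
    · exact hx.trans hy.symm
    · exact absurd (hp hy) (by rw [← hxy, hx, hpq]; exact lt_irrefl 0)
    · exact absurd (hp hx) (by rw [hxy, hy, hpq]; exact lt_irrefl 0)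
    · exact hinj (by simpa using hx) (by simpa using hy) hxy
  · rcases eq_or_ne x q with rfl | hx
    · simp only [orderDivisor, hpq, not_lt_zero, filter_false, sum_empty]
      lia
    · exact hle x (by simpa using hx)

lemma Connected.exists_sub_laplacian_le_orderDivisor (hG : G.Connected) (hD : ¬ G.Winnable D) :
    ∃ (f : V → ℤ) (p : V → ℕ), p.Injective ∧ D - G.laplacian f ≤ G.orderDivisor p := by
  obtain ⟨q⟩ := hG.1
  obtain ⟨f, hf⟩ := hG.exists_reduced q D
  refine ⟨f, hf.exists_le_orderDivisor ?_⟩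
  by_contra! hq
  refine hD (winnable_iff_exists_laplacian_le.2 ⟨f, fun x => ?_⟩)
  rcases eq_or_ne x q with rfl | hx
  · exact sub_nonneg.1 hq
  · exact sub_nonneg.1 (hf.1 x hx)

end OrderDivisor

section RiemannRoch

variable {G} {D : V → ℤ}

theorem Connected.winnable_of_genus_le_degree (hG : G.Connected) (hD : G.genus ≤ degree D) :
    G.Winnable D := by
  by_contra h
  obtain ⟨f, p, hp, hle⟩ := hG.exists_sub_laplacian_le_orderDivisor h
  have := degree_mono hle
  rw [degree_sub, degree_laplacian, G.degree_orderDivisor hp] at this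
  lia

theorem Connected.degree_sub_genus_le_rank (hG : G.Connected) :
    degree D - G.genus ≤ G.rank D := by
  have := hG.1
  refine le_rank_iff.2 fun E _ hE => hG.winnable_of_genus_le_degree ?_
  rw [degree_sub]
  lia

theorem Connected.linEquiv_canonical_of_le_rank (hG : G.Connected)
    (hdeg : degree D = 2 * G.genus - 2) (hrank : G.genus - 1 ≤ G.rank D) :
    G.LinEquiv D G.canonical := by
  have := hG.1
  have hwin : G.Winnable (G.canonical - D) := by
    by_contra h
    obtain ⟨f, p, hp, hle⟩ := hG.exists_sub_laplacian_le_orderDivisor h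
    let E := G.orderDivisor p - (G.canonical - D - G.laplacian f)
    have hE : degree E ≤ G.genus - 1 := by
      simp only [E, degree_sub, degree_laplacian, degree_canonical, hdeg, G.degree_orderDivisor hp]
      lia
    have hDE : D - E = G.orderDivisor (OrderDual.toDual ∘ p) - G.laplacian f := by
      simp only [E, ← G.orderDivisor_add_toDual hp]
      abel
    refine G.not_winnable_orderDivisor (OrderDual.toDual ∘ p)
      ((LinEquiv.winnable_iff ⟨f, rfl⟩).2 ?_)
    exact hDE ▸ le_rank_iff.1 hrank E (sub_nonneg.2 hle) hE
  obtain ⟨K, hK, f, rfl⟩ := hwin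
  have hzero : G.canonical - D - G.laplacian f = 0 := hK.eq_zero_of_degree_nonpos (by
    simp only [degree_sub, degree_laplacian, degree_canonical, hdeg]
    lia)
  exact ⟨-f, by rw [laplacian_neg, sub_neg_eq_add, ← sub_eq_zero, ← hzero]; abel⟩

end RiemannRoch

section PlaneCurveRanks

/-- The multiples `l • H` with `-2 ≤ l ≤ k` have rank at least `l * (l + 3) / 2`, the dimension of
the linear system cut out by the curves of degree `l` on a smooth plane curve of degree `k + 1`
with line section `H`. The bound is doubled to avoid division. -/
def HasPlaneCurveRanks (k : ℤ) (H : V → ℤ) : Prop :=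
  ∀ l : ℤ, -2 ≤ l → l ≤ k → l * (l + 3) ≤ 2 * G.rank (l • H)

lemma two_mul_choose_two (m : ℕ) : 2 * (m.choose 2 : ℤ) = m * (m - 1) := by
  qify
  rw [Nat.cast_choose_two]
  ring

lemma even_mul_add_three (l : ℤ) : Even (l * (l + 3)) := by
  rw [Int.even_mul, Int.even_add]
  exact (em (Even l)).imp_right fun h => by simp [h, show ¬ Even (3 : ℤ) by decide]

variable {G} {k : ℤ} {D H H' : V → ℤ}

lemma mul_add_three_le_two_mul_rank_of_neg [Nonempty V] {l : ℤ} (hl : -2 ≤ l) (hl0 : l < 0) :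
    l * (l + 3) ≤ 2 * G.rank D := by
  have := neg_one_le_rank (G := G) (D := D)
  nlinarith

lemma LinEquiv.hasPlaneCurveRanks (h : G.LinEquiv H H') (hH : G.HasPlaneCurveRanks k H) :
    G.HasPlaneCurveRanks k H' :=
  fun l hl hlk => (h.smul l).rank_eq ▸ hH l hl hlk

lemma Connected.hasPlaneCurveRanks (hG : G.Connected) (hg : 2 * G.genus = k * (k - 1))
    (hdeg : degree H = k + 1)
    (hrank : ∀ l, 1 ≤ l → l ≤ k - 2 → l * (l + 3) ≤ 2 * G.rank (l • H)) :
    G.HasPlaneCurveRanks k H := by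
  have := hG.1
  intro l hl hlk
  rcases lt_or_ge l 0 with hneg | hnonneg
  · exact mul_add_three_le_two_mul_rank_of_neg hl hneg
  rcases hnonneg.eq_or_lt with rfl | hpos
  · have := Effective.rank_nonneg (G := G) (D := (0 : ℤ) • H) (by simp [Effective])
    lia
  rcases le_or_gt l (k - 2) with hle | hgt
  · exact hrank l hpos hle
  · have := hG.degree_sub_genus_le_rank (D := l • H)
    rw [degree_smul, hdeg] at this
    obtain rfl | rfl : l = k - 1 ∨ l = k := by lia
    all_goals linarith

lemma HasPlaneCurveRanks.linEquiv_canonical (hH : G.HasPlaneCurveRanks k H) (hG : G.Connected)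
    (hk : 0 ≤ k) (hg : 2 * G.genus = k * (k - 1)) (hdeg : degree H = k + 1) :
    G.LinEquiv ((k - 2) • H) G.canonical := by
  have := hH (k - 2) (by lia) (by lia)
  refine hG.linEquiv_canonical_of_le_rank ?_ (by linarith)
  rw [degree_smul, hdeg, hg]
  ring

end PlaneCurveRanks

section AttachComplete

variable (v : V) (k n : ℕ)

lemma laplacian_attachComplete (f : V → ℤ) (g : Fin n → ℤ) :
    (attachComplete G v k n).laplacian (Sum.elim f g) =
      Sum.elim (G.laplacian f + Pi.single v ((k + 1) * (n * f v - ∑ i, g i)))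
        (fun i => (k + 1) * (g i - f v) + (n * g i - ∑ j, g j)) := by
  ext (a | i)
  · rcases eq_or_ne a v with rfl | ha
    · simp [laplacian, attachComplete, ← mul_sum]
    · simp [laplacian, attachComplete, ha]
  · have hne (j : Fin n) : ((if i = j then 0 else 1 : ℕ) : ℤ) * (g i - g j) = g i - g j := by
      split_ifs with h <;> simp [h]
    simp only [laplacian, attachComplete, Fintype.sum_sum_type, Sum.elim_inl, Sum.elim_inr, hne]
    simp

lemma canonical_attachComplete :
    (attachComplete G v k n).canonical =
      Sum.elim (G.canonical + Pi.single v (n * (k + 1) : ℤ)) (fun _ => (k + n - 2 : ℤ)) := by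
  ext (a | i)
  · rcases eq_or_ne a v with rfl | ha
    · simp only [canonical, valence, attachComplete, Fintype.sum_sum_type, ↓reduceIte, sum_const,
        card_univ, Fintype.card_fin, smul_eq_mul, Nat.cast_add, Nat.cast_mul, Nat.cast_one,
        Sum.elim_inl, Pi.add_apply, Pi.single_eq_same]
      ring
    · simp [canonical, valence, attachComplete, ha]
  · have := i.pos
    simp only [canonical, valence, attachComplete, Fintype.sum_sum_type, sum_ite_eq', mem_univ,
      ↓reduceIte, sum_ite, sum_const_zero, filter_ne, sum_const, card_erase_of_mem, card_univ,
      Fintype.card_fin, smul_eq_mul, mul_one, zero_add, Nat.cast_add, Nat.cast_one, Sum.elim_inr]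
    lia

lemma two_mul_genus_attachComplete :
    2 * (attachComplete G v k n).genus = 2 * G.genus + n * (2 * k + n - 1) := by
  have h := (attachComplete G v k n).degree_canonical
  rw [canonical_attachComplete, ← degree_comp_inl_add_degree_comp_inr, Sum.elim_comp_inl,
    Sum.elim_comp_inr, degree_add, degree_canonical, degree_single] at h
  simp only [degree, sum_const, card_univ, Fintype.card_fin, nsmul_eq_mul] at h
  linarith

/-- The divisor `(k + 1) v + u_1 + ⋯ + u_n` on `attachComplete G v k n`, where the `u_i` are the
new vertices. It represents the common class of the divisors `(k + n + 1) u_i`. -/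
def lineDivisor : V ⊕ Fin n → ℤ :=
  Sum.elim (Pi.single v (k + 1)) 1

lemma linEquiv_lineDivisor_single (u : Fin n) :
    (attachComplete G v k n).LinEquiv (lineDivisor v k n) (Pi.single (Sum.inr u) (k + n + 1)) := by
  refine ⟨Sum.elim 0 (-Pi.single u 1), ?_⟩
  rw [laplacian_attachComplete]
  ext (a | i)
  · simp [lineDivisor, laplacian, Pi.single_apply]
  · rcases eq_or_ne i u with rfl | hi
    · simp only [lineDivisor, Pi.single_eq_same, Pi.sub_apply, Sum.elim_inr, Pi.one_apply,
        Pi.zero_apply, Pi.neg_apply, Pi.single_apply, sum_neg_distrib, sum_ite_eq', mem_univ,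
        ↓reduceIte]
      ring
    · simp [lineDivisor, Pi.single_apply, hi]

lemma linEquiv_smul_lineDivisor :
    (attachComplete G v k n).LinEquiv ((k + 1 : ℤ) • lineDivisor v k n)
      (Sum.elim (Pi.single v ((k + 1) * (k + n + 1))) 0) := by
  refine ⟨Sum.elim 0 1, ?_⟩
  rw [laplacian_attachComplete]
  ext (a | i)
  · rcases eq_or_ne a v with rfl | ha
    · simp only [lineDivisor, laplacian, sub_self, mul_zero, sum_const_zero, Sum.elim_inl,
        Pi.sub_apply, Pi.smul_apply, Pi.add_apply, Pi.zero_apply, Pi.one_apply, Pi.single_eq_same,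
        sum_const, card_univ, Fintype.card_fin, smul_eq_mul, nsmul_eq_mul]
      ring
    · simp [lineDivisor, laplacian, ha]
  · simp [lineDivisor]

variable {G v k n} {D : V → ℤ} {D' : Fin n → ℤ}

lemma Winnable.sumElim (hD : G.Winnable D) (hD' : Effective D') :
    (attachComplete G v k n).Winnable (Sum.elim D D') := by
  obtain ⟨f, hf⟩ := winnable_iff_exists_laplacian_le.1 hD
  refine winnable_iff_exists_laplacian_le.2 ⟨Sum.elim f fun _ => f v, ?_⟩
  rw [laplacian_attachComplete]
  rintro (a | i)
  · simpa using hf a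
  · simpa using hD' i

lemma Connected.connected_attachComplete (hG : G.Connected) :
    (attachComplete G v k n).Connected := by
  let K := attachComplete G v k n
  have hinl (a b : V) : Relation.ReflTransGen K.Adj (Sum.inl a) (Sum.inl b) :=
    (hG.2 a b).lift Sum.inl fun _ _ h => h
  have hto (x : V ⊕ Fin n) : Relation.ReflTransGen K.Adj x (Sum.inl v) := by
    rcases x with a | i
    · exact hinl a v
    · exact .single (by simp [K, Adj, attachComplete])
  have hfrom (x : V ⊕ Fin n) : Relation.ReflTransGen K.Adj (Sum.inl v) x := by
    rcases x with a | i
    · exact hinl v a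
    · exact .single (by simp [K, Adj, attachComplete])
  exact ⟨hG.1.map Sum.inl, fun x y => (hto x).trans (hfrom y)⟩

end AttachComplete

section LineDivisorRanks

variable {G} {v : V} {k n : ℕ} {l : ℤ} {E : V ⊕ Fin n → ℤ}

-- A curve of degree `l` with more than `l` points on a line contains the line.
lemma winnable_smul_lineDivisor_sub_of_lt (hl : l ≤ k + n)
    (hrank : (l - 1) * (l - 1 + 3) ≤
      2 * (attachComplete G v k n).rank ((l - 1) • lineDivisor v k n))
    (hE : Effective E) (hdeg : 2 * degree E ≤ l * (l + 3)) {u : Fin n} (hu : l < E (Sum.inr u)) :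
    (attachComplete G v k n).Winnable (l • lineDivisor v k n - E) := by
  have : Nonempty (V ⊕ Fin n) := ⟨Sum.inl v⟩
  let P : V ⊕ Fin n → ℤ := Pi.single (Sum.inr u) (l + 1)
  have hrest : (attachComplete G v k n).Winnable ((l - 1) • lineDivisor v k n - (E - P)) := by
    refine (le_two_mul_rank_iff (even_mul_add_three _)).1 hrank _ ?_ ?_
    · intro x
      rcases eq_or_ne x (Sum.inr u) with rfl | hx
      · simpa [P] using hu
      · simpa [P, hx] using hE x
    · rw [degree_sub, degree_single]
      linarith
  have hline : (attachComplete G v k n).Winnable (lineDivisor v k n - P) := by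
    rw [((linEquiv_lineDivisor_single G v k n u).sub_right P).winnable_iff, ← Pi.single_sub]
    exact (effective_single _ (by lia)).winnable
  convert hrest.add hline using 1
  module

lemma winnable_smul_lineDivisor_sub_of_le (hE : ∀ i, E (Sum.inr i) ≤ l)
    (hwin : G.Winnable (l • Pi.single v (k + 1 : ℤ) - E ∘ Sum.inl)) :
    (attachComplete G v k n).Winnable (l • lineDivisor v k n - E) := by
  convert hwin.sumElim (v := v) (k := k) (D' := fun i => l - E (Sum.inr i))
    fun i => sub_nonneg.2 (hE i) using 1
  ext (a | i) <;> simp [lineDivisor]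

-- By Riemann's inequality on `G`, `k + 1` of the `l` line sections, whose sum is a multiple of `v`,
-- absorb the part of `E` on `V` up to a multiple `c` of `v`.
lemma winnable_smul_lineDivisor_sub_of_not_winnable (hG : G.Connected)
    (hg : 2 * G.genus = k * (k - 1)) (hl : l ≤ k + n)
    (hrank : (l - k - 1) * (l - k - 1 + 3) ≤
      2 * (attachComplete G v k n).rank ((l - k - 1) • lineDivisor v k n))
    (hE : Effective E) (hdeg : 2 * degree E ≤ l * (l + 3))
    (hwin : ¬ G.Winnable (l • Pi.single v (k + 1 : ℤ) - E ∘ Sum.inl)) :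
    (attachComplete G v k n).Winnable (l • lineDivisor v k n - E) := by
  have : Nonempty (V ⊕ Fin n) := ⟨Sum.inl v⟩
  let c := degree (E ∘ Sum.inl) - (l * (k + 1) - G.genus + 1)
  have hc : 0 ≤ c := by
    have := mt hG.winnable_of_genus_le_degree hwin
    rw [degree_sub, degree_smul, degree_single] at this
    lia
  let E' : V ⊕ Fin n → ℤ := Sum.elim (Pi.single v c) (E ∘ Sum.inr)
  have hE' : Effective E' := by
    rintro (a | i)
    · exact effective_single v hc a
    · exact hE (Sum.inr i)
  have hdegE' : 2 * degree E' ≤ (l - k - 1) * (l - k - 1 + 3) := by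
    rw [← degree_comp_inl_add_degree_comp_inr, Sum.elim_comp_inl, Sum.elim_comp_inr, degree_single]
    rw [← degree_comp_inl_add_degree_comp_inr] at hdeg
    linarith
  have hrest : (attachComplete G v k n).Winnable ((l - k - 1) • lineDivisor v k n - E') :=
    (le_two_mul_rank_iff (even_mul_add_three _)).1 hrank E' hE' hdegE'
  have hEE' : E - E' = Sum.elim (E ∘ Sum.inl - Pi.single v c) (0 : Fin n → ℤ) := by
    ext (a | i) <;> simp [E']
  have hlines : (attachComplete G v k n).Winnable ((k + 1 : ℤ) • lineDivisor v k n - (E - E')) := by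
    rw [((linEquiv_smul_lineDivisor G v k n).sub_right (E - E')).winnable_iff, hEE',
      ← Sum.elim_sub_sub, sub_zero]
    refine Winnable.sumElim (hG.winnable_of_genus_le_degree ?_) fun _ => le_rfl
    simp only [degree_sub, degree_single, c]
    nlinarith
  convert hrest.add hlines using 1
  module

theorem hasPlaneCurveRanks_lineDivisor (hG : G.Connected) (hg : 2 * G.genus = k * (k - 1))
    (hH : G.HasPlaneCurveRanks k (Pi.single v (k + 1 : ℤ))) :
    (attachComplete G v k n).HasPlaneCurveRanks (k + n) (lineDivisor v k n) := fun l hl hlkn => by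
  have := hG.1
  rcases lt_or_ge l 0 with hneg | hnonneg
  · exact mul_add_three_le_two_mul_rank_of_neg hl hneg
  refine (le_two_mul_rank_iff (even_mul_add_three l)).2 fun E hE hdeg => ?_
  by_cases! hline : ∃ u, l < E (Sum.inr u)
  · obtain ⟨u, hu⟩ := hline
    have hrec := hasPlaneCurveRanks_lineDivisor hG hg hH (l - 1) (by lia) (by lia)
    exact winnable_smul_lineDivisor_sub_of_lt hlkn hrec hE hdeg hu
  by_cases hwin : G.Winnable (l • Pi.single v (k + 1 : ℤ) - E ∘ Sum.inl)
  · exact winnable_smul_lineDivisor_sub_of_le hline hwin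
  have hkl : k < l := by
    by_contra! hlk
    rw [← degree_comp_inl_add_degree_comp_inr] at hdeg
    have hinr : 0 ≤ degree (E ∘ Sum.inr) := Effective.degree_nonneg fun i => hE (Sum.inr i)
    exact hwin ((le_two_mul_rank_iff (even_mul_add_three l)).1 (hH l hl hlk) _
      (fun a => hE (Sum.inl a)) (by linarith))
  have hrec := hasPlaneCurveRanks_lineDivisor hG hg hH (l - k - 1) (by lia) (by lia)
  exact winnable_smul_lineDivisor_sub_of_not_winnable hG hg hlkn hrec hE hdeg hwin
termination_by l => (l + 2).toNat

end LineDivisorRanks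

end Multigraph

/-- Upper bound main lemma: with `G'` of genus `C(k,2)` satisfying the
rank hypothesis at `v`, and `G` obtained by attaching `K_n` to `v` along `k+1` edges:
(1) `g(G) = C(k+n,2)`; (2) `(k+n-2)(k+n+1)·u ∼ K_G` for every `u ∈ K_n`;
(3) `r(l(k+n+1)·u) ≥ l(l+3)/2` for `-2 ≤ l ≤ k+n` and every `u ∈ K_n`. -/
theorem stmt11 (G' : Multigraph V) (hG' : G'.Connected)
    (k : ℕ) (hgenus : G'.genus = (Nat.choose k 2 : ℤ)) (v : V)
    (hrank : ∀ l : ℤ, 1 ≤ l → l ≤ (k : ℤ) - 2 →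
      l * (l + 3) ≤ 2 * G'.rank (fun w => if w = v then l * ((k : ℤ) + 1) else 0))
    (n : ℕ) (hn : 1 ≤ n) :
    (attachComplete G' v k n).genus = (Nat.choose (k + n) 2 : ℤ) ∧
    (∀ u : Fin n,
      (attachComplete G' v k n).LinEquiv
        (fun w => if w = Sum.inr u then ((k : ℤ) + n - 2) * ((k : ℤ) + n + 1) else 0)
        (attachComplete G' v k n).canonical) ∧
    (∀ l : ℤ, -2 ≤ l → l ≤ (k : ℤ) + n → ∀ u : Fin n,
      l * (l + 3) ≤ 2 * (attachComplete G' v k n).rank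
        (fun w => if w = Sum.inr u then l * ((k : ℤ) + n + 1) else 0)) := by
  have hg' : 2 * G'.genus = k * (k - 1) := by
    rw [hgenus, Multigraph.two_mul_choose_two]
  have hg : 2 * (attachComplete G' v k n).genus = (k + n : ℤ) * (k + n - 1) := by
    rw [Multigraph.two_mul_genus_attachComplete, hg']
    ring
  simp only [Multigraph.ite_eq_smul_single] at hrank ⊢
  have hranks' : G'.HasPlaneCurveRanks k (Pi.single v (k + 1 : ℤ)) :=
    hG'.hasPlaneCurveRanks hg' (Multigraph.degree_single _ _) hrank
  have hranks (u : Fin n) : (attachComplete G' v k n).HasPlaneCurveRanks (k + n)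
      (Pi.single (Sum.inr u) (k + n + 1 : ℤ)) :=
    (Multigraph.linEquiv_lineDivisor_single G' v k n u).hasPlaneCurveRanks
      (Multigraph.hasPlaneCurveRanks_lineDivisor hG' hg' hranks')
  refine ⟨?_, fun u => ?_, fun l hl hlkn u => hranks u l hl hlkn⟩
  · have := Multigraph.two_mul_choose_two (k + n)
    push_cast at this
    linarith
  · exact (hranks u).linEquiv_canonical hG'.connected_attachComplete (by positivity) hg
      (Multigraph.degree_single _ _)
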